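/- The integral R_C(0, 1/2) = ∫_0^∞ cos(πx/2)/(exp(2π√x) − 1) dx converges and equals 1/(4π). -/

import Mathlib

open MeasureTheory Real Set

/-- cubic Taylor remainder of exp -/
theorem exp_rem : ∃ E : ℂ → ℂ, Differentiable ℂ E ∧
    ∀ w, Complex.exp w = 1 + w + w^2/2 + w^3 * E w := by
  have d1 : ∀ f : ℂ → ℂ, Differentiable ℂ f → Differentiable ℂ (dslope f 0) := by
    intro f hf
    have := (Complex.differentiableOn_dslope (f := f) (c := 0) (s := univ) Filter.univ_mem).2
      hf.differentiableOn
    exact differentiableOn_univ.1 this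
  have key : ∀ f : ℂ → ℂ, Differentiable ℂ f → ∃ g : ℂ → ℂ, Differentiable ℂ g ∧
      ∀ w, f w = f 0 + w * g w := by
    intro f hf
    refine ⟨dslope f 0, d1 f hf, fun w => ?_⟩
    have := sub_smul_dslope f 0 w
    simp only [sub_zero, smul_eq_mul] at this
    rw [this]; ring
  obtain ⟨a, ha, ha'⟩ := key _ Complex.differentiable_exp
  obtain ⟨b, hb, hb'⟩ := key _ ha
  obtain ⟨c, hc, hc'⟩ := key _ hb
  have e1 : ∀ w, Complex.exp w = a w + w * deriv a w := by
    intro w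
    have h1 : HasDerivAt (fun w => Complex.exp 0 + w * a w) (1 * a w + w * deriv a w) w :=
      ((hasDerivAt_id w).mul (ha w).hasDerivAt).const_add _
    have h2 : Complex.exp = fun w => Complex.exp 0 + w * a w := funext ha'
    rw [← h2] at h1
    rw [(Complex.hasDerivAt_exp w).unique h1]; ring
  have a0 : a 0 = 1 := by have := e1 0; simpa using this.symm
  have e2 : ∀ w, deriv a w = b w + w * deriv b w := by
    intro w
    have h1 : HasDerivAt (fun w => a 0 + w * b w) (1 * b w + w * deriv b w) w :=
      ((hasDerivAt_id w).mul (hb w).hasDerivAt).const_add _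
    have h2 : a = fun w => a 0 + w * b w := funext hb'
    rw [← h2] at h1
    rw [h1.deriv]; ring
  have b0 : b 0 = 1/2 := by
    have h : Differentiable ℂ (deriv b) := by
      have := (hb.differentiableOn (s := univ)).deriv isOpen_univ
      exact differentiableOn_univ.1 this
    have h1 : HasDerivAt (fun w => a w + w * (b w + w * deriv b w)) _ 0 :=
      ((ha 0).hasDerivAt).add ((hasDerivAt_id (0:ℂ)).mul
        (((hb 0).hasDerivAt).add ((hasDerivAt_id (0:ℂ)).mul (h 0).hasDerivAt)))
    have h2 : Complex.exp = fun w => a w + w * (b w + w * deriv b w) := by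
      funext w; rw [e1 w, e2 w]
    rw [← h2] at h1
    have := (Complex.hasDerivAt_exp 0).unique h1
    simp [e2 0] at this
    linear_combination (-1/2) * this
  refine ⟨c, hc, fun w => ?_⟩
  rw [ha' w, hb' w, hc' w, a0, b0, Complex.exp_zero]; ring

theorem sinh_zero {z : ℂ} (h : Complex.sinh (π * z) = 0) : ∃ n : ℤ, z = n * Complex.I := by
  have : Complex.sin (π * z * Complex.I) = 0 := by rw [Complex.sin_mul_I, h]; simp
  rw [Complex.sin_eq_zero_iff] at this
  obtain ⟨k, hk⟩ := this
  have hp : (π:ℂ) ≠ 0 := by exact_mod_cast Real.pi_ne_zero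
  refine ⟨-k, ?_⟩
  have h2 : z * Complex.I = k := by
    apply mul_left_cancel₀ hp; rw [← mul_assoc, hk]; ring
  push_cast
  rw [← h2]
  linear_combination z * Complex.I_mul_I

noncomputable def rA : ℂ := -(1 - Complex.I)/2
noncomputable def rC : ℂ := -Complex.I/4 - 1/(4*π) + 3*Complex.I/(4*π)
noncomputable def rE (z : ℂ) : ℂ := Complex.exp (Complex.I * π * z^2/2)
noncomputable def rN (z : ℂ) : ℂ :=
  -rE z * (Complex.exp (π*z) - Complex.I)/2 + Complex.I * z * Complex.sinh (π*z)
    - rA * Complex.cosh (π*z) + Complex.sinh (π*z)/2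
    - rC * Complex.cosh (π*z) * Complex.sinh (π*z)^2
noncomputable def rQ (z : ℂ) : ℂ := rN z / Complex.sinh (π*z)^3
noncomputable def rF (z : ℂ) : ℂ := (rE z - 1) / Complex.sinh (π*z)^2

theorem rE_add (z : ℂ) : rE (z + Complex.I) = -Complex.I * rE z * Complex.exp (-(π*z)) := by
  unfold rE
  have : Complex.I * π * (z+Complex.I)^2/2 = (-(π/2*Complex.I)) + Complex.I * π * z^2/2 + (-(π*z)) := by
    have := Complex.I_mul_I
    linear_combination (π * z + π*Complex.I/2) * this
  rw [this, Complex.exp_add, Complex.exp_add, Complex.exp_neg (π/2*Complex.I), Complex.exp_pi_div_two_mul_I, Complex.inv_I]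

theorem sinh_add_I (z : ℂ) : Complex.sinh (π*(z+Complex.I)) = -Complex.sinh (π*z) := by
  rw [mul_add, Complex.sinh_add, Complex.sinh_mul_I, Complex.cosh_mul_I]; simp
theorem cosh_add_I (z : ℂ) : Complex.cosh (π*(z+Complex.I)) = -Complex.cosh (π*z) := by
  rw [mul_add, Complex.cosh_add, Complex.sinh_mul_I, Complex.cosh_mul_I]; simp

theorem rQ_add {z : ℂ} (hz : Complex.sinh (π*z) ≠ 0) : rQ (z + Complex.I) = rQ z + rF z := by
  unfold rQ rF rN
  rw [sinh_add_I, cosh_add_I, rE_add]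
  have h1 : Complex.exp (π*(z+Complex.I)) = -Complex.exp (π*z) := by
    rw [mul_add, Complex.exp_add, Complex.exp_pi_mul_I]; ring
  have h2 : Complex.exp (-(π*z)) = (Complex.exp (π*z))⁻¹ := Complex.exp_neg _
  have h3 : Complex.exp (π*z) = Complex.sinh (π*z) + Complex.cosh (π*z) := by
    rw [← Complex.cosh_add_sinh]; ring
  have h4 : Complex.exp (-(π*z)) = Complex.cosh (π*z) - Complex.sinh (π*z) := by
    rw [← Complex.cosh_sub_sinh]
  have h5 := Complex.cosh_sq_sub_sinh_sq (π*z)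
  rw [h1, h4, h3]
  generalize Complex.sinh (π*z) = s at *
  generalize Complex.cosh (π*z) = c at *
  have hI := Complex.I_mul_I
  generalize Complex.I = i at *
  generalize rE z = e at *
  generalize rA = A at *
  generalize rC = C at *
  have key : -(-i * e * (c - s)) * (-(s + c) - i) / 2 + i * (z + i) * -s - A * -c + -s / 2
      - C * -c * (-s)^2 = -(-e * (s + c - i) / 2 + i * z * s - A * c + s / 2 - C * c * s^2
        + (e - 1) * s) := by
    linear_combination (-i * e/2) * h5 - (e * (c-s)/2 + s) * hI
  rw [key]
  have : (-s)^3 = -s^3 := by ring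
  rw [this, neg_div_neg_eq, add_div]
  congr 1
  field_simp

open Filter Topology

theorem rN_lim : ∃ c0, Tendsto rQ (𝓝[≠] 0) (𝓝 c0) ∧ ∃ c1, Tendsto rF (𝓝[≠] 0) (𝓝 c1) := by
  obtain ⟨E, hE, hE'⟩ := exp_rem
  have hp : (π:ℂ) ≠ 0 := by exact_mod_cast Real.pi_ne_zero
  have hEc := hE.continuous
  -- sinh, cosh
  let S : ℂ → ℂ := fun w => (E w + E (-w))/2
  let D : ℂ → ℂ := fun w => (E w - E (-w))/2
  have hSc : Continuous S := by fun_prop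
  have hDc : Continuous D := by fun_prop
  have hsinh : ∀ w, Complex.sinh w = w * (1 + w^2 * S w) := by
    intro w; simp only [S, Complex.sinh, hE' w, hE' (-w)]; ring
  have hcosh : ∀ w, Complex.cosh w = 1 + w^2/2 + w^3 * D w := by
    intro w; simp only [D, Complex.cosh, hE' w, hE' (-w)]; ring
  have hrE : ∀ z, rE z = 1 + Complex.I * π * z^2/2 + z^4 * ((Complex.I * π/2)^2/2 + z^2 * (Complex.I * π/2)^3 * E (Complex.I * π * z^2/2)) := by
    intro z; unfold rE; rw [hE']; ring
  let R : ℂ → ℂ := fun z => ((Complex.I * π/2)^2/2 + z^2 * (Complex.I * π/2)^3 * E (Complex.I * π * z^2/2))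
  have hRc : Continuous R := by fun_prop
  have hrE : ∀ z, rE z = 1 + Complex.I * π * z^2/2 + z^4 * R z := hrE
  clear_value R S D
  let n : ℂ → ℂ := fun z =>
    -(z * R z * (1 - Complex.I + π*z + (π*z)^2/2 + (π*z)^3 * E (π*z)) +
      Complex.I * π /2 * (π + π^2*z/2 + π^3*z^2 * E (π*z)) + π^3 * E (π*z))/2
    + Complex.I * π^3 * z * S (π*z) - rA * π^3 * D (π*z) + π^3 * S (π*z) / 2
    - rC * (π^2 * (π^2*z/2 + π^3*z^2 * D (π*z)) * (1 + (π*z)^2 * S (π*z))^2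
        + π^2 * (2 * π^2 * z * S (π*z) + π^4 * z^3 * S (π*z)^2))
  have hnc : Continuous n := by fun_prop
  have hn : ∀ z, rN z = z^3 * n z := by
    intro z
    unfold rN
    rw [hrE, hsinh, hcosh, hE']
    simp only [n]
    have hI := Complex.I_mul_I
    have hC : rC * π = -Complex.I/4*π - 1/4 + 3*Complex.I/4 := by
      unfold rC; field_simp
    have hA : rA = -(1 - Complex.I)/2 := rfl
    generalize rC = C at *
    generalize rA = A at *
    generalize Complex.I = i at *
    subst hA
    linear_combination (π * z^2/4) * hI - π * z^2 * hC
  have hT : Tendsto (fun z : ℂ => (π * (1 + (π*z)^2 * S (π*z)))) (𝓝[≠] 0) (𝓝 (π:ℂ)) := by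
    have : Continuous (fun z : ℂ => (π * (1 + (π*z)^2 * S (π*z)))) := by fun_prop
    have := (this.tendsto 0).mono_left (nhdsWithin_le_nhds (s := {0}ᶜ))
    simpa using this
  refine ⟨n 0 / π^3, ?_, (Complex.I * π/2) / π^2, ?_⟩
  · have h := ((hnc.tendsto 0).mono_left (nhdsWithin_le_nhds (s := {0}ᶜ))).div (hT.pow 3) (pow_ne_zero _ hp)
    refine h.congr' ?_
    filter_upwards [self_mem_nhdsWithin] with z hz
    have hz : z ≠ 0 := hz
    unfold rQ
    rw [hn, hsinh]
    simp only [Pi.div_apply]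
    rw [show (π * z * (1 + (π*z)^2 * S (π*z)))^3 = z^3 * (π * (1 + (π*z)^2 * S (π*z)))^3 by ring,
      mul_div_mul_left _ _ (pow_ne_zero 3 hz)]
  · have hc : Continuous (fun z : ℂ => Complex.I * π/2 + z^2 * R z) := by fun_prop
    have h := ((hc.tendsto 0).mono_left (nhdsWithin_le_nhds (s := {0}ᶜ))).div (hT.pow 2) (pow_ne_zero _ hp)
    simp only [ne_eq, OfNat.ofNat_ne_zero, not_false_eq_true, zero_pow, zero_mul, add_zero] at h
    refine h.congr' ?_
    filter_upwards [self_mem_nhdsWithin] with z hz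
    have hz : z ≠ 0 := hz
    unfold rF
    rw [hrE, hsinh]
    simp only [Pi.div_apply]
    rw [show (π * z * (1 + (π*z)^2 * S (π*z)))^2 = z^2 * (π * (1 + (π*z)^2 * S (π*z)))^2 by ring,
      show 1 + Complex.I * π * z^2/2 + z^4 * R z - 1 = z^2 * (Complex.I * π/2 + z^2 * R z) by ring,
      mul_div_mul_left _ _ (pow_ne_zero 2 hz)]

theorem rQ_diff {z : ℂ} (hz : Complex.sinh (π*z) ≠ 0) : DifferentiableAt ℂ rQ z := by
  unfold rQ rN rE
  have : Complex.sinh (π*z)^3 ≠ 0 := pow_ne_zero _ hz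
  fun_prop (disch := assumption)

theorem rQc : ∃ q : ℂ → ℂ, (∀ z, z ≠ 0 → z ≠ Complex.I → q z = rQ z) ∧
    ∀ T : ℝ, 0 < T → ContinuousOn q (uIcc (-T) T ×ℂ uIcc 0 1) ∧
      ∀ z ∈ Ioo (-T) T ×ℂ Ioo 0 1, DifferentiableAt ℂ q z := by
  obtain ⟨c0, h0, c1, h1⟩ := rN_lim
  have ns : ∀ z : ℂ, z ≠ 0 → z ≠ Complex.I → -1 < z.im → z.im < 2 → Complex.sinh (π*z) ≠ 0 := by
    intro z hz hz' ha hb h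
    obtain ⟨n, rfl⟩ := sinh_zero h
    simp at ha hb
    have ha : -1 < n := by exact_mod_cast ha
    have hb : n < 2 := by exact_mod_cast hb
    obtain rfl | rfl : n = 0 ∨ n = 1 := by omega
    · simp at hz
    · simp at hz'
  have hI : Tendsto rQ (𝓝[≠] Complex.I) (𝓝 (c0 + c1)) := by
    have h2 := h0.add h1
    have ht : Tendsto (fun z : ℂ => z - Complex.I) (𝓝[≠] Complex.I) (𝓝[≠] 0) := by
      refine tendsto_nhdsWithin_iff.2 ⟨?_, ?_⟩
      · have : Continuous (fun z : ℂ => z - Complex.I) := by fun_prop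
        simpa using (this.tendsto Complex.I).mono_left (nhdsWithin_le_nhds (s := {Complex.I}ᶜ))
      · filter_upwards [self_mem_nhdsWithin] with z hz
        simpa [sub_eq_zero] using hz
    refine (h2.comp ht).congr' ?_
    have hb : ∀ᶠ z : ℂ in 𝓝[≠] Complex.I, 0 < z.im ∧ z.im < 2 := by
      apply eventually_nhdsWithin_of_eventually_nhds
      have : Continuous (fun z : ℂ => z.im) := Complex.continuous_im
      exact (this.tendsto Complex.I).eventually (Ioo_mem_nhds (by simp) (by simp))
    filter_upwards [self_mem_nhdsWithin, hb] with z hz hz2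
    have hz : z ≠ Complex.I := hz
    simp only [Function.comp]
    rw [← rQ_add, sub_add_cancel]
    refine ns _ (sub_ne_zero.2 hz) ?_ (by simp; linarith) (by simp; linarith)
    intro h
    have := congrArg Complex.im h
    simp at this; linarith
  let q : ℂ → ℂ := Function.update (Function.update rQ 0 c0) Complex.I (c0+c1)
  have hq : ∀ z, z ≠ 0 → z ≠ Complex.I → q z = rQ z := by
    intro z h h'; simp [q, h, h']
  have hqe : ∀ z, z ≠ 0 → z ≠ Complex.I → q =ᶠ[𝓝 z] rQ := by
    intro z h h'
    filter_upwards [isOpen_ne.mem_nhds h, isOpen_ne.mem_nhds h'] with w hw hw'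
    exact hq w hw hw'
  have hd : ∀ z, z ≠ 0 → z ≠ Complex.I → -1 < z.im → z.im < 2 → DifferentiableAt ℂ q z := by
    intro z h h' ha hb
    exact (rQ_diff (ns z h h' ha hb)).congr_of_eventuallyEq (hqe z h h')
  refine ⟨q, hq, fun T hT => ⟨?_, ?_⟩⟩
  · intro z hz
    rw [Complex.mem_reProdIm, uIcc_of_le zero_le_one] at hz
    apply ContinuousAt.continuousWithinAt
    by_cases h : z = 0
    · subst h
      rw [continuousAt_iff_punctured_nhds]
      have : q 0 = c0 := by simp [q, Complex.I_ne_zero.symm]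
      rw [this]
      refine h0.congr' ?_
      filter_upwards [self_mem_nhdsWithin, nhdsWithin_le_nhds (isOpen_ne.mem_nhds Complex.I_ne_zero.symm)] with w hw hw'
      exact (hq w hw hw').symm
    by_cases h' : z = Complex.I
    · subst h'
      rw [continuousAt_iff_punctured_nhds]
      have : q Complex.I = c0 + c1 := by simp [q]
      rw [this]
      refine hI.congr' ?_
      filter_upwards [self_mem_nhdsWithin, nhdsWithin_le_nhds (isOpen_ne.mem_nhds Complex.I_ne_zero)] with w hw hw'
      exact (hq w hw' hw).symm
    exact (hd z h h' (by linarith [hz.2.1]) (by linarith [hz.2.2])).continuousAt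
  · intro z hz
    rw [Complex.mem_reProdIm] at hz
    refine hd z ?_ ?_ (by linarith [hz.2.1]) (by linarith [hz.2.2])
    · rintro rfl; simpa using hz.2.1
    · rintro rfl; simpa using hz.2.2

theorem side_abs (M : ℝ) (hM : 1 ≤ M) (e p q c z s : ℂ)
    (h1 : ‖e * (p - Complex.I)‖ ≤ 2 * M) (h2 : M / 4 ≤ ‖q‖) (h3 : ‖c‖ ≤ M) (h4 : ‖z‖ ≤ M)
    (h5 : ‖c - s * q‖ ≤ 1) :
    ‖(-e * (p - Complex.I)/2 + Complex.I * z * q - rA * c + q/2 - rC * c * q^2) / q^3 + s * rC‖ ≤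
      (22 + 16 * ‖rA‖ + ‖rC‖) * 4 / M := by
  have hM0 : 0 < M := by linarith
  have hq0 : 0 < ‖q‖ := by linarith
  have hq : q ≠ 0 := norm_pos_iff.1 hq0
  have e1 : (-e * (p - Complex.I)/2 + Complex.I * z * q - rA * c + q/2 - rC * c * q^2) / q^3 + s * rC
      = -(e * (p - Complex.I)/2 * q⁻¹^3) + Complex.I * z * q⁻¹^2 - rA * c * q⁻¹^3 + 1/2 * q⁻¹^2
        - rC * (c - s * q) * q⁻¹ := by
    field_simp; ring
  rw [e1]
  have ha : ‖q⁻¹‖ ≤ 4 / M := by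
    rw [norm_inv, inv_le_comm₀ hq0 (by positivity)]
    simpa using h2
  set a := ‖q⁻¹‖ with ha'
  have a0 : 0 ≤ a := norm_nonneg _
  have hMa : M * a ≤ 4 := by
    calc M * a ≤ M * (4/M) := by gcongr
      _ = 4 := by field_simp
  have ha4 : a ≤ 4 := by nlinarith
  have t1 : ‖e * (p - Complex.I)/2 * q⁻¹^3‖ ≤ 16 * a := by
    rw [norm_mul, norm_div, norm_pow, ← ha', Complex.norm_ofNat]
    calc ‖e * (p - Complex.I)‖ / 2 * a^3 ≤ (2 * M)/2 * a^3 := by gcongr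
      _ = (M * a) * a * a := by ring
      _ ≤ 4 * 4 * a := by gcongr
      _ = 16 * a := by ring
  have t2 : ‖Complex.I * z * q⁻¹^2‖ ≤ 4 * a := by
    rw [norm_mul, norm_mul, norm_pow, ← ha', Complex.norm_I, one_mul]
    calc ‖z‖ * a^2 ≤ M * a^2 := by gcongr
      _ = (M * a) * a := by ring
      _ ≤ 4 * a := by gcongr
  have t3 : ‖rA * c * q⁻¹^3‖ ≤ 16 * ‖rA‖ * a := by
    rw [norm_mul, norm_mul, norm_pow, ← ha']
    calc ‖rA‖ * ‖c‖ * a^3 ≤ ‖rA‖ * M * a^3 := by gcongr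
      _ = ‖rA‖ * ((M * a) * a * a) := by ring
      _ ≤ ‖rA‖ * (4 * 4 * a) := by gcongr
      _ = 16 * ‖rA‖ * a := by ring
  have t4 : ‖1/2 * q⁻¹^2‖ ≤ 2 * a := by
    rw [norm_mul, norm_pow, ← ha']
    norm_num
    nlinarith
  have t5 : ‖rC * (c - s * q) * q⁻¹‖ ≤ ‖rC‖ * a := by
    rw [norm_mul, norm_mul, ← ha']
    calc ‖rC‖ * ‖c - s * q‖ * a ≤ ‖rC‖ * 1 * a := by gcongr
      _ = _ := by ring
  calc _ ≤ ‖e * (p - Complex.I)/2 * q⁻¹^3‖ + ‖Complex.I * z * q⁻¹^2‖ + ‖rA * c * q⁻¹^3‖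
        + ‖1/2 * q⁻¹^2‖ + ‖rC * (c - s * q) * q⁻¹‖ := by
        refine (norm_sub_le _ _).trans (add_le_add_left ((norm_add_le _ _).trans (add_le_add_left
          ((norm_sub_le _ _).trans (add_le_add_left ((norm_add_le _ _).trans (le_of_eq ?_)) _)) _)) _)
        rw [norm_neg]
    _ ≤ (22 + 16 * ‖rA‖ + ‖rC‖) * a := by linarith
    _ ≤ (22 + 16 * ‖rA‖ + ‖rC‖) * (4 / M) := by gcongr
    _ = _ := by ring

theorem side (T y : ℝ) (hT : 1 ≤ T) (hy0 : 0 ≤ y) (hy : y ≤ 1) :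
    ‖rQ (T + y * Complex.I) + rC‖ ≤ (22 + 16 * ‖rA‖ + ‖rC‖) * 4 / Real.exp (π * T) ∧
    ‖rQ (-T + y * Complex.I) - rC‖ ≤ (22 + 16 * ‖rA‖ + ‖rC‖) * 4 / Real.exp (π * T) := by
  have hpi := Real.pi_gt_three
  have hM : π * T + 1 ≤ Real.exp (π * T) := Real.add_one_le_exp _
  have hpT : 3 ≤ π * T := by nlinarith
  have hTT : T + 1 ≤ π * T + 1 := by nlinarith
  set M := Real.exp (π * T) with hMdef
  have hM1 : 1 ≤ M := by linarith
  have hMi : Real.exp (-(π * T)) ≤ 1 := by rw [Real.exp_le_one_iff]; linarith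
  have nE : ∀ x : ℝ, ‖rE (x + y * Complex.I)‖ = Real.exp (-(π * x * y)) := by
    intro x
    unfold rE
    rw [Complex.norm_exp]
    congr 1
    simp [pow_two]
    ring
  have nP : ∀ x : ℝ, ‖Complex.exp (π * (x + y * Complex.I))‖ = Real.exp (π * x) := by
    intro x; rw [Complex.norm_exp]; simp
  have nP' : ∀ x : ℝ, ‖Complex.exp (-(π * (x + y * Complex.I)))‖ = Real.exp (-(π * x)) := by
    intro x; rw [Complex.norm_exp]; simp
  have nz : ∀ x : ℝ, |x| = T → ‖(x + y * Complex.I : ℂ)‖ ≤ M := by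
    intro x hx
    refine (norm_add_le _ _).trans ?_
    rw [norm_mul, Complex.norm_real, Complex.norm_real, Complex.norm_I, Real.norm_eq_abs,
      Real.norm_eq_abs, hx, abs_of_nonneg hy0]
    linarith
  have gen : ∀ a b : ℂ, ‖a‖ ≤ 1 → ‖b‖ = M → M/4 ≤ ‖b - a‖/2 ∧ ‖b + a‖/2 ≤ M := by
    intro a b ha hb
    constructor
    · have := norm_sub_norm_le b a
      linarith
    · have := norm_add_le b a
      linarith
  constructor
  · have g := gen (Complex.exp (-(π * (T + y * Complex.I)))) (Complex.exp (π * (T + y * Complex.I)))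
      (by rw [nP']; exact hMi) (nP T)
    have := side_abs M hM1 (rE (T + y * Complex.I)) (Complex.exp (π * (T + y * Complex.I)))
      (Complex.sinh (π * (T + y * Complex.I))) (Complex.cosh (π * (T + y * Complex.I)))
      (T + y * Complex.I) 1 ?_ ?_ ?_ (nz T (abs_of_nonneg (by linarith))) ?_
    · simpa [rQ, rN] using this
    · rw [norm_mul, nE]
      have h1 : Real.exp (-(π * T * y)) ≤ 1 := by rw [Real.exp_le_one_iff, neg_nonpos]; positivity
      have h2 : ‖Complex.exp (π * (T + y * Complex.I)) - Complex.I‖ ≤ 2 * M := by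
        refine (norm_sub_le _ _).trans ?_
        rw [nP, Complex.norm_I]; linarith
      calc _ ≤ 1 * (2 * M) := by gcongr
        _ = _ := by ring
    · rw [Complex.sinh, norm_div, Complex.norm_ofNat]; exact g.1
    · rw [Complex.cosh, norm_div, Complex.norm_ofNat]; exact g.2
    · rw [one_mul, Complex.cosh_sub_sinh, nP']; exact hMi
  · have c1 : (-T : ℂ) = ((-T : ℝ) : ℂ) := by push_cast; rfl
    rw [c1]
    have g := gen (Complex.exp (π * ((-T : ℝ) + y * Complex.I)))
      (Complex.exp (-(π * ((-T : ℝ) + y * Complex.I))))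
      (by rw [nP, mul_neg]; exact hMi) (by rw [nP', mul_neg, neg_neg])
    have := side_abs M hM1 (rE ((-T : ℝ) + y * Complex.I)) (Complex.exp (π * ((-T : ℝ) + y * Complex.I)))
      (Complex.sinh (π * ((-T : ℝ) + y * Complex.I))) (Complex.cosh (π * ((-T : ℝ) + y * Complex.I)))
      ((-T : ℝ) + y * Complex.I) (-1) ?_ ?_ ?_ (nz (-T) (by rw [abs_neg, abs_of_nonneg (by linarith)])) ?_
    · simpa [rQ, rN, sub_eq_add_neg] using this
    · rw [norm_mul, nE]
      have h1 : Real.exp (-(π * (-T) * y)) ≤ M := by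
        rw [hMdef, Real.exp_le_exp]; nlinarith
      have h2 : ‖Complex.exp (π * ((-T : ℝ) + y * Complex.I)) - Complex.I‖ ≤ 2 := by
        refine (norm_sub_le _ _).trans ?_
        rw [nP, Complex.norm_I, mul_neg]; linarith
      calc _ ≤ M * 2 := by gcongr
        _ = _ := by ring
    · rw [Complex.sinh, norm_div, Complex.norm_ofNat, norm_sub_rev]; exact g.1
    · rw [Complex.cosh, norm_div, Complex.norm_ofNat, add_comm]; exact g.2
    · rw [neg_one_mul, sub_neg_eq_add, Complex.cosh_add_sinh, nP, mul_neg]; exact hMi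

theorem rF_main : (∀ T : ℝ, 1 ≤ T → IntervalIntegrable (fun x : ℝ => rF x) volume (-T) T) ∧
    Tendsto (fun T : ℝ => ∫ x in -T..T, rF x) atTop (𝓝 (-2 * Complex.I * rC)) := by
  obtain ⟨q, hq, hq'⟩ := rQc
  have hbot : ∀ T : ℝ, 1 ≤ T → IntervalIntegrable (fun x : ℝ => q (x + (0:ℝ) * Complex.I)) volume (-T) T := by
    intro T hT
    apply ContinuousOn.intervalIntegrable
    refine (hq' T (by linarith)).1.comp (by fun_prop) ?_
    intro x hx
    rw [Complex.mem_reProdIm]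
    simpa using hx
  have htop : ∀ T : ℝ, 1 ≤ T → IntervalIntegrable (fun x : ℝ => q (x + (1:ℝ) * Complex.I)) volume (-T) T := by
    intro T hT
    apply ContinuousOn.intervalIntegrable
    refine (hq' T (by linarith)).1.comp (by fun_prop) ?_
    intro x hx
    rw [Complex.mem_reProdIm]
    simpa using hx
  have hside : ∀ x T : ℝ, 1 ≤ T → |x| = T → IntervalIntegrable (fun y : ℝ => q (x + y * Complex.I)) volume 0 1 := by
    intro x T hT hx
    apply ContinuousOn.intervalIntegrable
    refine (hq' T (by linarith)).1.comp (by fun_prop) ?_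
    intro y hy
    rw [Complex.mem_reProdIm, uIcc_of_le (by linarith : -T ≤ T)]
    refine ⟨?_, by simpa using hy⟩
    simpa [← abs_le] using hx.le
  have hdiff : ∀ x : ℝ, x ≠ 0 → q (x + (1:ℝ) * Complex.I) - q (x + (0:ℝ) * Complex.I) = rF x := by
    intro x hx
    have hxc : (x : ℂ) ≠ 0 := by exact_mod_cast hx
    have e0 : (x : ℂ) + (0:ℝ) * Complex.I = x := by simp
    have e1 : (x : ℂ) + (1:ℝ) * Complex.I = x + Complex.I := by simp
    rw [e0, e1, hq, hq, rQ_add]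
    · ring
    · rw [← Complex.ofReal_mul, ← Complex.ofReal_sinh]
      have : Real.sinh (π * x) ≠ 0 := by
        rw [Ne, Real.sinh_eq_zero]; exact mul_ne_zero Real.pi_ne_zero hx
      exact_mod_cast this
    · exact hxc
    · intro h; have := congrArg Complex.im h; simp at this
    · intro h; have := congrArg Complex.im h; simp at this
    · intro h; apply hxc; simpa using h
  have hae : ∀ᵐ x : ℝ, q (x + (1:ℝ) * Complex.I) - q (x + (0:ℝ) * Complex.I) = rF x := by
    have : ∀ᵐ x : ℝ, x ≠ 0 := by simp [ae_iff]
    filter_upwards [this] with x hx using hdiff x hx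
  have hint : ∀ T : ℝ, 1 ≤ T → IntervalIntegrable (fun x : ℝ => rF x) volume (-T) T := by
    intro T hT
    refine ((htop T hT).sub (hbot T hT)).congr_ae ?_
    exact ae_restrict_of_ae hae
  refine ⟨hint, ?_⟩
  set K := (22 + 16 * ‖rA‖ + ‖rC‖) * 4 with hK
  rw [tendsto_iff_norm_sub_tendsto_zero]
  have hlim : Tendsto (fun T : ℝ => 2 * (K / Real.exp (π * T))) atTop (𝓝 0) := by
    have h1 : Tendsto (fun T : ℝ => Real.exp (π * T)) atTop atTop :=
      Real.tendsto_exp_atTop.comp (tendsto_id.const_mul_atTop Real.pi_pos)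
    simpa using (h1.const_div_atTop K).const_mul 2
  refine squeeze_zero' (Eventually.of_forall fun _ => norm_nonneg _) ?_ hlim
  filter_upwards [eventually_ge_atTop 1] with T hT
  have hc := Complex.integral_boundary_rect_eq_zero_of_differentiable_on_off_countable q
    (⟨-T, 0⟩ : ℂ) (⟨T, 1⟩ : ℂ) ∅ countable_empty (hq' T (by linarith)).1 (by
      intro x hx
      apply (hq' T (by linarith)).2
      simpa [min_eq_left (by linarith : -T ≤ T), max_eq_right (by linarith : -T ≤ T)] using hx)
  simp only [smul_eq_mul] at hc
  have hF : ∫ x in -T..T, rF x = (∫ x in -T..T, q (x + (1:ℝ) * Complex.I)) - ∫ x in -T..T, q (x + (0:ℝ) * Complex.I) := by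
    rw [← intervalIntegral.integral_sub (htop T hT) (hbot T hT)]
    apply intervalIntegral.integral_congr_ae
    filter_upwards [hae] with x hx _ using hx.symm
  have hT0 : T ≠ 0 := by linarith
  have hqs : ∀ x : ℝ, x ≠ 0 → ∀ y : ℝ, q (x + y * Complex.I) = rQ (x + y * Complex.I) := by
    intro x hx y
    apply hq
    · intro h; apply hx; simpa using congrArg Complex.re h
    · intro h; apply hx; simpa using congrArg Complex.re h
  have hR : ‖(∫ y in (0:ℝ)..1, q (T + y * Complex.I)) + rC‖ ≤ K / Real.exp (π * T) := by
    have : (∫ y in (0:ℝ)..1, q (T + y * Complex.I)) + rC = ∫ y in (0:ℝ)..1, (q (T + y * Complex.I) + rC) := by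
      rw [intervalIntegral.integral_add (hside T T hT (abs_of_nonneg (by linarith))) (by simp)]; simp
    rw [this]
    have := intervalIntegral.norm_integral_le_of_norm_le_const (a := 0) (b := 1) (C := K / Real.exp (π * T))
      (f := fun y : ℝ => q (T + y * Complex.I) + rC) (by
        intro y hy
        rw [uIoc_of_le zero_le_one] at hy
        rw [hqs T hT0]
        exact (side T y hT hy.1.le hy.2).1)
    simpa using this
  have hL : ‖(∫ y in (0:ℝ)..1, q ((-T:ℝ) + y * Complex.I)) - rC‖ ≤ K / Real.exp (π * T) := by
    have : (∫ y in (0:ℝ)..1, q ((-T:ℝ) + y * Complex.I)) - rC = ∫ y in (0:ℝ)..1, (q ((-T:ℝ) + y * Complex.I) - rC) := by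
      rw [intervalIntegral.integral_sub (hside (-T) T hT (by rw [abs_neg, abs_of_nonneg (by linarith)])) (by simp)]; simp
    rw [this]
    have := intervalIntegral.norm_integral_le_of_norm_le_const (a := 0) (b := 1) (C := K / Real.exp (π * T))
      (f := fun y : ℝ => q ((-T:ℝ) + y * Complex.I) - rC) (by
        intro y hy
        rw [uIoc_of_le zero_le_one] at hy
        rw [hqs (-T) (neg_ne_zero.2 hT0)]
        have := (side T y hT hy.1.le hy.2).2
        push_cast
        exact this)
    simpa using this
  have e : (∫ x in -T..T, rF x) - -2 * Complex.I * rC =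
      Complex.I * ((∫ y in (0:ℝ)..1, q (T + y * Complex.I)) + rC) -
      Complex.I * ((∫ y in (0:ℝ)..1, q ((-T:ℝ) + y * Complex.I)) - rC) := by
    rw [hF]
    linear_combination -hc
  rw [e]
  refine (norm_sub_le _ _).trans ?_
  rw [norm_mul, norm_mul, Complex.norm_I]
  linarith

theorem sin_main : Tendsto (fun T : ℝ => ∫ x in (0:ℝ)..T, Real.sin (π * x^2/2) / Real.sinh (π * x)^2)
    atTop (𝓝 (1/(4*π))) := by
  obtain ⟨hi, hl⟩ := rF_main
  have him : ∀ x : ℝ, (rF x).im = Real.sin (π * x^2/2) / Real.sinh (π * x)^2 := by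
    intro x
    unfold rF rE
    have h1 : Complex.sinh (π * x)^2 = ((Real.sinh (π * x)^2 : ℝ) : ℂ) := by push_cast; rfl
    have h2 : Complex.I * π * (x:ℂ)^2/2 = ((π * x^2/2 : ℝ) : ℂ) * Complex.I := by push_cast; ring
    rw [h1, h2, Complex.div_ofReal_im, Complex.sub_im, Complex.exp_ofReal_mul_I_im]
    simp
  have h2 := ((Complex.continuous_im.tendsto _).comp hl).const_mul (1/2)
  have hv : 1/2 * (-2 * Complex.I * rC).im = 1/(4*π) := by
    have : rC = ((-1/(4*π) : ℝ) : ℂ) + ((-1/4 + 3/(4*π) : ℝ) : ℂ) * Complex.I := by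
      unfold rC; push_cast; ring
    rw [this]
    generalize (-1/4 + 3/(4*π) : ℝ) = b
    have e : -2 * Complex.I * (((-1/(4*π) : ℝ) : ℂ) + (b : ℂ) * Complex.I) =
        ((2 * b : ℝ) : ℂ) + ((1/(2*π) : ℝ) : ℂ) * Complex.I := by
      push_cast
      linear_combination (-2 * b : ℂ) * Complex.I_mul_I
    rw [e, Complex.add_im, Complex.ofReal_im, Complex.im_ofReal_mul, Complex.I_im]
    ring
  rw [hv] at h2
  refine h2.congr' ?_
  filter_upwards [eventually_ge_atTop 1] with T hT
  simp only [Function.comp]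
  have h3 := Complex.imCLM.intervalIntegral_comp_comm (hi T hT)
  simp only [Complex.imCLM_apply, him] at h3
  rw [← h3]
  have hii : IntervalIntegrable (fun x : ℝ => Real.sin (π * x^2/2) / Real.sinh (π * x)^2) volume (-T) T := by
    have := (hi T hT)
    have h := (⟨Complex.imCLM.integrable_comp this.1, Complex.imCLM.integrable_comp this.2⟩ :
      IntervalIntegrable (fun x : ℝ => Complex.imCLM (rF x)) volume (-T) T)
    refine IntervalIntegrable.congr_ae h (Eventually.of_forall fun x => ?_)
    exact him x
  have hsub1 : IntervalIntegrable (fun x : ℝ => Real.sin (π * x^2/2) / Real.sinh (π * x)^2) volume (-T) 0 :=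
    hii.mono_set (by rw [uIcc_of_le (by linarith), uIcc_of_le (by linarith)]; exact Icc_subset_Icc le_rfl (by linarith))
  have hsub2 : IntervalIntegrable (fun x : ℝ => Real.sin (π * x^2/2) / Real.sinh (π * x)^2) volume 0 T :=
    hii.mono_set (by rw [uIcc_of_le (by linarith), uIcc_of_le (by linarith)]; exact Icc_subset_Icc (by linarith) le_rfl)
  rw [← intervalIntegral.integral_add_adjacent_intervals hsub1 hsub2]
  have h4 := intervalIntegral.integral_comp_neg (a := 0) (b := T) (fun x : ℝ => Real.sin (π * x^2/2) / Real.sinh (π * x)^2)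
  simp only [neg_zero, mul_neg, Real.sinh_neg, neg_sq] at h4
  rw [← h4]
  ring

theorem final_k : IntegrableOn (fun x : ℝ => Real.exp (-(π * √x)) / (π * √x)) (Ioi 0) := by
  have hpi := Real.pi_pos
  refine integrableOn_Ioi_deriv_of_nonneg (g := fun x => -(2/π^2) * Real.exp (-(π * √x))) (l := 0) ?_ ?_ ?_ ?_
  · apply Continuous.continuousWithinAt; fun_prop
  · intro x hx
    have hx : 0 < x := hx
    have hs : 0 < √x := Real.sqrt_pos.2 hx
    have h := (((Real.hasDerivAt_sqrt hx.ne').const_mul π).neg.exp).const_mul (-(2/π^2))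
    refine h.congr_deriv ?_
    simp only [Pi.neg_apply]
    field_simp
  · intro x hx; positivity
  · have h1 : Tendsto (fun x : ℝ => π * √x) atTop atTop :=
      Real.tendsto_sqrt_atTop.const_mul_atTop hpi
    have h2 := (Real.tendsto_exp_neg_atTop_nhds_zero.comp h1).const_mul (-(2/π^2))
    simpa using h2

theorem exp_bd {u : ℝ} (hu : 0 < u) : u * Real.exp u ≤ (Real.exp (2 * u) - 1)/2 ∧
    u^2 * Real.exp u / 4 ≤ Real.sinh u^2 := by
  constructor
  · have h := Real.self_le_sinh_iff.2 hu.le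
    have : (Real.exp (2 * u) - 1)/2 = Real.sinh u * Real.exp u := by
      rw [Real.sinh_eq, two_mul, Real.exp_add]
      have := Real.exp_neg u
      have : Real.exp (-u) * Real.exp u = 1 := by rw [← Real.exp_add]; simp
      linear_combination (1/2) * this
    rw [this]; gcongr
  · have h := Real.self_le_sinh_iff.2 (by linarith : 0 ≤ u/2)
    have hc : Real.exp (u/2) / 2 ≤ Real.cosh (u/2) := by
      rw [Real.cosh_eq]; have := Real.exp_pos (-(u/2)); linarith
    have h2 : Real.sinh u = 2 * Real.sinh (u/2) * Real.cosh (u/2) := by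
      rw [← Real.sinh_two_mul]; congr 1; ring
    have h3 : u * Real.exp (u/2) / 2 ≤ Real.sinh u := by
      rw [h2]
      calc u * Real.exp (u/2) / 2 = 2 * (u/2) * (Real.exp (u/2) / 2) := by ring
        _ ≤ _ := by gcongr
    have h4 : u^2 * Real.exp u / 4 = (u * Real.exp (u/2) / 2)^2 := by
      have : Real.exp u = Real.exp (u/2)^2 := by rw [← Real.exp_nat_mul]; congr 1; push_cast; ring
      rw [this]; ring
    rw [h4]; gcongr

theorem final_f : IntegrableOn
      (fun x : ℝ => Real.cos (π * x / 2) / (Real.exp (2 * π * Real.sqrt x) - 1)) (Ioi 0) := by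
  refine Integrable.mono' final_k (by apply Measurable.aestronglyMeasurable; fun_prop) ?_
  filter_upwards [ae_restrict_mem measurableSet_Ioi] with x hx
  have hs : 0 < √x := Real.sqrt_pos.2 hx
  have hu : 0 < π * √x := by positivity
  have h := (exp_bd hu).1
  have h0 : 0 < π * √x * Real.exp (π * √x) := by positivity
  rw [norm_div, Real.norm_eq_abs, Real.norm_eq_abs, mul_assoc 2, abs_of_pos (by linarith : 0 < Real.exp (2 * (π * √x)) - 1)]
  calc _ ≤ 1 / (π * √x * Real.exp (π * √x)) := by
        gcongr
        · exact Real.abs_cos_le_one _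
        · linarith
    _ = _ := by rw [Real.exp_neg]; field_simp

theorem final_g : IntegrableOn
      (fun x : ℝ => Real.sin (π * x / 2) / (2 * √x * Real.sinh (π * √x)^2)) (Ioi 0) := by
  refine Integrable.mono' final_k (by apply Measurable.aestronglyMeasurable; fun_prop) ?_
  filter_upwards [ae_restrict_mem measurableSet_Ioi] with x hx
  have hx : 0 < x := hx
  have hs : 0 < √x := Real.sqrt_pos.2 hx
  have hu : 0 < π * √x := by positivity
  have h := (exp_bd hu).2
  have h0 : 0 < (π * √x)^2 * Real.exp (π * √x) / 4:= by positivity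
  have hsq : 0 < Real.sinh (π * √x)^2 := by linarith
  rw [norm_div, Real.norm_eq_abs, Real.norm_eq_abs, abs_of_pos (by positivity : 0 < 2 * √x * Real.sinh (π * √x)^2)]
  have hsin : |Real.sin (π * x / 2)| ≤ π * x / 2 := by
    refine Real.abs_sin_le_abs.trans (le_of_eq (abs_of_pos (by positivity)))
  calc _ ≤ (π * x / 2) / (2 * √x * ((π * √x)^2 * Real.exp (π * √x) / 4)) := by gcongr
    _ = _ := by
      have : x = √x^2 := (Real.sq_sqrt hx.le).symm
      rw [Real.exp_neg]
      generalize √x = s at *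
      subst this
      field_simp
      try norm_num

theorem final_ibp : ∫ x in Ioi (0:ℝ), (Real.cos (π * x / 2) / (Real.exp (2 * π * Real.sqrt x) - 1)
      - Real.sin (π * x / 2) / (2 * √x * Real.sinh (π * √x)^2)) = 0 := by
  have hpi := Real.pi_pos
  have hb : ∀ x : ℝ, 0 < x → ‖(2/π) * Real.sin (π * x / 2) / (Real.exp (2 * π * √x) - 1)‖ ≤
      √x * Real.exp (-(π * √x)) / (2 * π) * π := by
    intro x hx
    have hs : 0 < √x := Real.sqrt_pos.2 hx
    have hu : 0 < π * √x := by positivity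
    have h := (exp_bd hu).1
    have h0 : 0 < π * √x * Real.exp (π * √x) := by positivity
    have hsin : |Real.sin (π * x / 2)| ≤ π * x / 2 := by
      refine Real.abs_sin_le_abs.trans (le_of_eq (abs_of_pos (by positivity)))
    rw [norm_div, norm_mul, Real.norm_eq_abs, Real.norm_eq_abs, Real.norm_eq_abs, mul_assoc 2,
      abs_of_pos (by linarith : 0 < Real.exp (2 * (π * √x)) - 1), abs_of_pos (by positivity : 0 < 2/π)]
    calc _ ≤ (2/π) * (π * x / 2) / (2 * (π * √x * Real.exp (π * √x))) := by
          gcongr; linarith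
      _ = √x * Real.exp (-(π * √x)) / (2 * π) := by
          have : x = √x^2 := (Real.sq_sqrt hx.le).symm
          rw [Real.exp_neg]
          generalize √x = s at *
          subst this
          field_simp
      _ ≤ _ := by
          have : 1 ≤ π := by linarith [Real.pi_gt_three]
          exact le_mul_of_one_le_right (by positivity) this
  have h := integral_Ioi_of_hasDerivAt_of_tendsto (a := 0) (m := 0)
    (f := fun x => (2/π) * Real.sin (π * x / 2) / (Real.exp (2 * π * √x) - 1))
    (f' := fun x => (Real.cos (π * x / 2) / (Real.exp (2 * π * Real.sqrt x) - 1)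
      - Real.sin (π * x / 2) / (2 * √x * Real.sinh (π * √x)^2))) ?_ ?_ (final_f.sub final_g) ?_
  · rw [h]; simp
  · have hc : Continuous (fun x : ℝ => √x * Real.exp (-(π * √x)) / (2 * π) * π) := by fun_prop
    have h1 : Tendsto (fun x : ℝ => √x * Real.exp (-(π * √x)) / (2 * π) * π) (𝓝[Ici 0] 0) (𝓝 0) := by
      simpa using (hc.tendsto 0).mono_left (nhdsWithin_le_nhds (s := Ici 0))
    unfold ContinuousWithinAt
    simp only [mul_zero, zero_div, Real.sin_zero]
    refine squeeze_zero_norm' ?_ h1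
    filter_upwards [self_mem_nhdsWithin] with x hx
    rcases (show 0 ≤ x from hx).eq_or_lt with rfl | hx
    · simp
    · exact hb x hx
  · intro x hx
    have hx : 0 < x := hx
    have hs : 0 < √x := Real.sqrt_pos.2 hx
    have hu : 0 < π * √x := by positivity
    have h0 : 0 < π * √x * Real.exp (π * √x) := by positivity
    have hbd := (exp_bd hu).1
    have hne : Real.exp (2 * π * √x) - 1 ≠ 0 := by
      rw [mul_assoc]; linarith
    have hn : HasDerivAt (fun x : ℝ => (2/π) * Real.sin (π * x / 2)) (Real.cos (π * x / 2)) x := by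
      have := ((((hasDerivAt_id x).const_mul π).div_const 2).sin).const_mul (2/π)
      refine this.congr_deriv ?_
      simp; field_simp
    have hd : HasDerivAt (fun x : ℝ => Real.exp (2 * π * √x) - 1) (Real.exp (2 * π * √x) * (π / √x)) x := by
      have := (((Real.hasDerivAt_sqrt hx.ne').const_mul (2 * π)).exp).sub_const 1
      refine this.congr_deriv ?_
      field_simp
    refine (hn.div hd hne).congr_deriv ?_
    have e1 : Real.sinh (π * √x)^2 = (Real.exp (2 * π * √x) - 1)^2 / (4 * Real.exp (2 * π * √x)) := by
      have e2 : Real.exp (2 * π * √x) = Real.exp (π * √x)^2 := by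
        rw [← Real.exp_nat_mul]; congr 1; push_cast; ring
      rw [e2, Real.sinh_eq, Real.exp_neg]
      field_simp
      try ring
    rw [e1]
    have := Real.exp_pos (2 * π * √x)
    generalize Real.exp (2 * π * √x) = E at *
    field_simp
    try ring
  · have h1 : Tendsto (fun x : ℝ => √x * Real.exp (-(π * √x)) / (2 * π) * π) atTop (𝓝 0) := by
      have a := (Real.tendsto_pow_mul_exp_neg_atTop_nhds_zero 1)
      have b : Tendsto (fun x : ℝ => π * √x) atTop atTop :=
        Real.tendsto_sqrt_atTop.const_mul_atTop hpi
      have := (a.comp b).const_mul (1/(2*π))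
      rw [mul_zero] at this
      refine this.congr fun x => ?_
      simp only [Function.comp]; field_simp
    refine squeeze_zero_norm' ?_ h1
    filter_upwards [eventually_gt_atTop 0] with x hx using hb x hx

/-- Ramanujan's integral `R_C(0, 1/2)` converges and equals `1/(4π)`. -/
theorem ramanujan_RC_zero_half :
    IntegrableOn
      (fun x : ℝ => Real.cos (π * x / 2) / (Real.exp (2 * π * Real.sqrt x) - 1)) (Ioi 0) ∧
    (∫ x in Ioi (0:ℝ), Real.cos (π * x / 2) / (Real.exp (2 * π * Real.sqrt x) - 1)) =
      1 / (4 * π) := by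
  refine ⟨final_f, ?_⟩
  have h := final_ibp
  rw [integral_sub final_f final_g, sub_eq_zero] at h
  rw [h]
  have hcong : ∀ x ∈ Ioi (0:ℝ), (2 * x ^ ((2:ℝ) - 1)) • (Real.sin (π * (x^(2:ℝ)) / 2) /
      (2 * √(x^(2:ℝ)) * Real.sinh (π * √(x^(2:ℝ)))^2)) = Real.sin (π * x^2/2) / Real.sinh (π * x)^2 := by
    intro x hx
    have hx : 0 < x := hx
    have e1 : x ^ ((2:ℝ) - 1) = x := by norm_num
    rw [e1, Real.rpow_two, Real.sqrt_sq hx.le, smul_eq_mul]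
    have : Real.sinh (π * x) ≠ 0 := by
      rw [Ne, Real.sinh_eq_zero]; positivity
    field_simp
  have hi := (integrableOn_Ioi_comp_rpow_iff _ (two_ne_zero (α := ℝ))).2 final_g
  rw [abs_of_pos (two_pos (α := ℝ))] at hi
  rw [integrableOn_congr_fun hcong measurableSet_Ioi] at hi
  have he := integral_comp_rpow_Ioi_of_pos (g := fun x : ℝ => Real.sin (π * x / 2) / (2 * √x * Real.sinh (π * √x)^2)) (two_pos (α := ℝ))
  rw [setIntegral_congr_fun measurableSet_Ioi hcong] at he
  rw [← he]
  exact tendsto_nhds_unique (intervalIntegral_tendsto_integral_Ioi 0 hi tendsto_id) sin_main
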